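/- arXiv:1903.00543 — 3 statements merged into one kernel-verified Lean document; each statement's English description precedes it below -/
import Mathlib

section
/- Let S be a nonempty finite set, θ : S → ℝ with θ_i > 0 for all i ∈ S, let a ∈ S and Λ > 0, and write θ_S = Σ_{i∈S} θ_i. Define probability mass functions p and q on S by p_i = θ_i/θ_S for all i ∈ S, q_i = θ_i/(θ_S + Λ) for i ≠ a, and q_a = (θ_a + Λ)/(θ_S + Λ). Then Σ_{i∈S} p_i²/q_i − 1 = Λ²(θ_S − θ_a)/(θ_S² (θ_a + Λ)). -/
open Finset

/-! Raising the weight of `a` only rescales the probabilities of the other items, so `p i / q i` has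
the same value `c = (θ_S + Λ) / θ_S` for all `i ≠ a`. Since both distributions have mass `1`, this
forces `p a = 1 - c * (1 - q a)`, and the chi-square divergence of `p` from `q` becomes
`(c - 1) ^ 2` times the odds `(1 - q a) / q a` against `a` under `q`. Here `c - 1 = Λ / θ_S`, and
the odds are `(θ_S - θ a) / (θ a + Λ)`. -/

lemma sum_sq_div_sub_one_of_div_eq_const {ι K : Type*} [Field K] {S : Finset ι} {a : ι}
    (ha : a ∈ S) {p q : ι → K} {c : K} (hp : ∑ i ∈ S, p i = 1) (hq : ∑ i ∈ S, q i = 1)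
    (hq₀ : ∀ i ∈ S, q i ≠ 0) (hc : ∀ i ∈ S, i ≠ a → p i / q i = c) :
    ∑ i ∈ S, p i ^ 2 / q i - 1 = (c - 1) ^ 2 * ((1 - q a) / q a) := by
  classical
  have sum_erase_q : ∑ i ∈ S.erase a, q i = 1 - q a := by rw [sum_erase_eq_sub ha, hq]
  have p_eq : ∀ i ∈ S.erase a, p i = c * q i := fun i hi =>
    (div_eq_iff (hq₀ i (mem_of_mem_erase hi))).1 (hc i (mem_of_mem_erase hi) (ne_of_mem_erase hi))
  have p_a : p a = 1 - c * (1 - q a) := by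
    rw [← sum_erase_q, mul_sum, ← sum_congr rfl p_eq, sum_erase_eq_sub ha, hp, sub_sub_cancel]
  have sum_erase_sq_div : ∑ i ∈ S.erase a, p i ^ 2 / q i = c ^ 2 * (1 - q a) := by
    rw [← sum_erase_q, mul_sum]
    refine sum_congr rfl fun i hi => ?_
    have hqi : q i ≠ 0 := hq₀ i (mem_of_mem_erase hi)
    rw [p_eq i hi]
    field_simp
  have hqa : q a ≠ 0 := hq₀ a ha
  rw [← add_sum_erase S _ ha, sum_erase_sq_div, p_a]
  field_simp
  ring

lemma sum_update_add {ι M : Type*} [DecidableEq ι] [AddCommMonoid M] {S : Finset ι} {a : ι}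
    (ha : a ∈ S) (θ : ι → M) (Λ : M) :
    ∑ j ∈ S, Function.update θ a (θ a + Λ) j = ∑ j ∈ S, θ j + Λ := by
  rw [sum_update_of_mem ha, sdiff_singleton_eq_erase, add_right_comm, add_sum_erase S θ ha]

/-- The multinomial logit probability that item `i` wins when the set `S` is offered, with weights
`θ` in an arbitrary semifield. It is meant for `i ∈ S` and a nonzero total weight; it is
not set to `0` for `i ∉ S`. -/
def mnlProb {ι K : Type*} [Semifield K] (S : Finset ι) (θ : ι → K) (i : ι) : K :=
  θ i / ∑ j ∈ S, θ j

section mnlProb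

variable {ι K : Type*} {S : Finset ι} {a : ι}

lemma sum_mnlProb [Semifield K] {θ : ι → K} (hS : ∑ j ∈ S, θ j ≠ 0) :
    ∑ i ∈ S, mnlProb S θ i = 1 := by
  simp only [mnlProb, ← sum_div, div_self hS]

lemma one_sub_mnlProb_div_mnlProb [Field K] {θ : ι → K} (hS : ∑ j ∈ S, θ j ≠ 0) (i : ι) :
    (1 - mnlProb S θ i) / mnlProb S θ i = (∑ j ∈ S, θ j - θ i) / θ i := by
  rw [mnlProb, one_sub_div hS, div_div_div_cancel_right₀ hS]

variable [DecidableEq ι]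

lemma mnlProb_update_add [Semifield K] (ha : a ∈ S) (θ : ι → K) (Λ : K) (i : ι) :
    mnlProb S (Function.update θ a (θ a + Λ)) i =
      if i = a then (θ a + Λ) / (∑ j ∈ S, θ j + Λ) else θ i / (∑ j ∈ S, θ j + Λ) := by
  rw [mnlProb, sum_update_add ha, Function.update_apply, ite_div]

lemma mnlProb_div_mnlProb_update_add_of_ne [Semifield K] (ha : a ∈ S) {θ : ι → K} (Λ : K) {i : ι}
    (hi : i ≠ a) (hθ : θ i ≠ 0) :
    mnlProb S θ i / mnlProb S (Function.update θ a (θ a + Λ)) i =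
      (∑ j ∈ S, θ j + Λ) / ∑ j ∈ S, θ j := by
  rw [mnlProb_update_add ha, if_neg hi, mnlProb, div_div_div_cancel_left' _ _ hθ]

theorem stmt_2_general [Field K] (ha : a ∈ S) {θ : ι → K} {Λ : K}
    (hθ : ∀ i ∈ S, i ≠ a → θ i ≠ 0) (hS : ∑ j ∈ S, θ j ≠ 0)
    (hSΛ : ∑ j ∈ S, θ j + Λ ≠ 0) (haΛ : θ a + Λ ≠ 0) :
    ∑ i ∈ S, mnlProb S θ i ^ 2 / mnlProb S (Function.update θ a (θ a + Λ)) i - 1 =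
      Λ ^ 2 * (∑ j ∈ S, θ j - θ a) / ((∑ j ∈ S, θ j) ^ 2 * (θ a + Λ)) := by
  have sum_update_ne_zero : ∑ j ∈ S, Function.update θ a (θ a + Λ) j ≠ 0 := by
    rwa [sum_update_add ha]
  have update_ne_zero : ∀ i ∈ S, Function.update θ a (θ a + Λ) i ≠ 0 := by
    intro i hi
    obtain rfl | hia := eq_or_ne i a
    · rwa [Function.update_self]
    · rw [Function.update_of_ne hia]
      exact hθ i hi hia
  rw [sum_sq_div_sub_one_of_div_eq_const ha (sum_mnlProb hS) (sum_mnlProb sum_update_ne_zero)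
    (fun i hi => div_ne_zero (update_ne_zero i hi) sum_update_ne_zero)
    (fun i hi hia => mnlProb_div_mnlProb_update_add_of_ne ha Λ hia (hθ i hi hia)),
    one_sub_mnlProb_div_mnlProb sum_update_ne_zero, sum_update_add ha, Function.update_self,
    add_sub_add_right_eq_sub, div_sub_one hS, add_sub_cancel_left, div_pow, div_mul_div_comm]

end mnlProb

theorem stmt_2 {ι : Type*} [DecidableEq ι] (S : Finset ι) (hS : S.Nonempty)
    (θ : ι → ℝ) (hθ : ∀ i ∈ S, 0 < θ i) (a : ι) (ha : a ∈ S) (Λ : ℝ) (hΛ : 0 < Λ) :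
    (∑ i ∈ S, (θ i / ∑ j ∈ S, θ j) ^ 2 /
        (if i = a then (θ a + Λ) / ((∑ j ∈ S, θ j) + Λ)
          else θ i / ((∑ j ∈ S, θ j) + Λ))) - 1 =
      Λ ^ 2 * ((∑ j ∈ S, θ j) - θ a) / ((∑ j ∈ S, θ j) ^ 2 * (θ a + Λ)) := by
  have hT : 0 < ∑ j ∈ S, θ j := sum_pos hθ hS
  simp only [← mnlProb_update_add ha, ← mnlProb.eq_def]
  exact stmt_2_general ha (fun i hi _ => (hθ i hi).ne') hT.ne' (add_pos hT hΛ).ne'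
    (add_pos (hθ a ha) hΛ).ne'
end

section
/- Let S be a nonempty finite set, θ : S → ℝ with θ_i > 0 for all i ∈ S, let a ∈ S and Λ > 0, and write θ_S = Σ_{i∈S} θ_i. Define probability mass functions p and q on S by p_i = θ_i/θ_S for all i ∈ S, q_i = θ_i/(θ_S + Λ) for i ≠ a, and q_a = (θ_a + Λ)/(θ_S + Λ). Then the Kullback–Leibler divergence satisfies Σ_{i∈S} p_i · ln(p_i/q_i) ≤ Λ²(θ_S − θ_a)/(θ_S² (θ_a + Λ)) ≤ Λ²/(θ_S (θ_a + Λ)). -/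
open Finset

/-!
The logarithmic inequality `log x ≤ x - 1` bounds the Kullback–Leibler divergence by the `χ²`
divergence. For the winner distributions of two MNL instances that differ in the parameter of one
item, the `χ²` divergence has a closed form, and this closed form is the first bound.
-/

section Divergence

/-- The `χ²` divergence of `p` from `q`, for (not necessarily normalized) weights on a finite set.
It is meaningful for `q` positive on `S`: where `q` vanishes, the term is `0` instead of `∞`. -/
noncomputable def chiSqDiv {ι : Type*} (S : Finset ι) (p q : ι → ℝ) : ℝ :=
  ∑ i ∈ S, (p i - q i) ^ 2 / q i

lemma mul_log_div_le_sq_sub_div_add_sub {x y : ℝ} (hx : 0 ≤ x) (hy : 0 < y) :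
    x * Real.log (x / y) ≤ (x - y) ^ 2 / y + (x - y) := by
  have log_bound : x * Real.log (x / y) ≤ x * (x / y - 1) := by
    rcases hx.eq_or_lt with rfl | hx_pos
    · simp
    · exact mul_le_mul_of_nonneg_left (Real.log_le_sub_one_of_pos (div_pos hx_pos hy)) hx
  refine log_bound.trans_eq ?_
  field_simp
  ring

lemma sum_mul_log_div_le_chiSqDiv {ι : Type*} {S : Finset ι} {p q : ι → ℝ}
    (hp : ∀ i ∈ S, 0 ≤ p i) (hq : ∀ i ∈ S, 0 < q i) (hpq : ∑ i ∈ S, p i ≤ ∑ i ∈ S, q i) :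
    ∑ i ∈ S, p i * Real.log (p i / q i) ≤ chiSqDiv S p q :=
  calc ∑ i ∈ S, p i * Real.log (p i / q i)
      ≤ ∑ i ∈ S, ((p i - q i) ^ 2 / q i + (p i - q i)) :=
        sum_le_sum fun i hi => mul_log_div_le_sq_sub_div_add_sub (hp i hi) (hq i hi)
    _ = chiSqDiv S p q + (∑ i ∈ S, p i - ∑ i ∈ S, q i) := by
        rw [sum_add_distrib, sum_sub_distrib, chiSqDiv]
    _ ≤ chiSqDiv S p q := add_le_of_nonpos_right (sub_nonpos.mpr hpq)

end Divergence

section AddSingle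

variable {ι M : Type*} [DecidableEq ι] {S : Finset ι} {f : ι → M} {a : ι} {c : M}

lemma sum_add_single [AddCommMonoid M] (ha : a ∈ S) :
    ∑ i ∈ S, (f + Pi.single a c : ι → M) i = ∑ i ∈ S, f i + c := by
  simp only [Pi.add_apply, sum_add_distrib, sum_pi_single', if_pos ha]

lemma add_single_pos [AddZeroClass M] [LT M] (hf : ∀ i ∈ S, 0 < f i) (hc : 0 < f a + c) :
    ∀ i ∈ S, 0 < (f + Pi.single a c : ι → M) i := by
  intro i hi
  rcases eq_or_ne i a with rfl | hia
  · simpa using hc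
  · simpa [hia] using hf i hi

end AddSingle

section MultinomialLogit

variable {ι : Type*} {S : Finset ι} {θ : ι → ℝ} {a : ι} {Λ : ℝ}

/-- The winner distribution `Pr(i | S)` of the multinomial logit model with parameters `θ`.
As a function on all of `ι` it is a probability mass function only after restriction to `S`. -/
noncomputable def choiceProb (S : Finset ι) (θ : ι → ℝ) (i : ι) : ℝ :=
  θ i / ∑ j ∈ S, θ j

lemma choiceProb_pos (hθ : ∀ i ∈ S, 0 < θ i) {i : ι} (hi : i ∈ S) : 0 < choiceProb S θ i :=
  div_pos (hθ i hi) (sum_pos hθ ⟨i, hi⟩)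

lemma sum_choiceProb (hθ : ∑ i ∈ S, θ i ≠ 0) : ∑ i ∈ S, choiceProb S θ i = 1 := by
  simp only [choiceProb, ← sum_div, div_self hθ]

variable [DecidableEq ι]

lemma choiceProb_add_single (ha : a ∈ S) (i : ι) :
    choiceProb S (θ + Pi.single a Λ) i =
      if i = a then (θ a + Λ) / (∑ j ∈ S, θ j + Λ) else θ i / (∑ j ∈ S, θ j + Λ) := by
  rw [choiceProb, sum_add_single ha]
  split_ifs with hia <;> simp [hia]

lemma chiSqDiv_choiceProb_add_single (ha : a ∈ S) (hT : ∑ i ∈ S, θ i ≠ 0)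
    (hTΛ : ∑ i ∈ S, θ i + Λ ≠ 0) (haΛ : θ a + Λ ≠ 0) :
    chiSqDiv S (choiceProb S θ) (choiceProb S (θ + Pi.single a Λ)) =
      Λ ^ 2 * (∑ i ∈ S, θ i - θ a) / ((∑ i ∈ S, θ i) ^ 2 * (θ a + Λ)) := by
  have sum_others : ∑ i ∈ S.erase a, θ i = ∑ i ∈ S, θ i - θ a := sum_erase_eq_sub ha
  rw [chiSqDiv, ← add_sum_erase S _ ha]
  simp only [choiceProb_add_single ha, if_true]
  simp only [choiceProb]
  generalize ∑ i ∈ S, θ i = T at *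
  have term_a : (θ a / T - (θ a + Λ) / (T + Λ)) ^ 2 / ((θ a + Λ) / (T + Λ)) =
      Λ ^ 2 * (T - θ a) ^ 2 / (T ^ 2 * (T + Λ) * (θ a + Λ)) := by
    field_simp
    ring
  have term_other : ∀ i ∈ S.erase a,
      (θ i / T - if i = a then (θ a + Λ) / (T + Λ) else θ i / (T + Λ)) ^ 2 /
        (if i = a then (θ a + Λ) / (T + Λ) else θ i / (T + Λ)) =
      θ i * (Λ ^ 2 / (T ^ 2 * (T + Λ))) := by
    intro i hi
    rw [if_neg (ne_of_mem_erase hi)]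
    rcases eq_or_ne (θ i) 0 with hi_zero | hi_ne
    · simp [hi_zero]
    · field_simp
      ring
  rw [term_a, sum_congr rfl term_other, ← sum_mul, sum_others]
  field_simp
  ring

end MultinomialLogit

theorem stmt_3_general {ι : Type*} [DecidableEq ι] (S : Finset ι)
    (θ : ι → ℝ) (hθ : ∀ i ∈ S, 0 < θ i) (a : ι) (ha : a ∈ S) (Λ : ℝ) (hΛ : 0 < θ a + Λ) :
    (∑ i ∈ S, (θ i / ∑ j ∈ S, θ j) *
        Real.log ((θ i / ∑ j ∈ S, θ j) /
          (if i = a then (θ a + Λ) / ((∑ j ∈ S, θ j) + Λ)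
            else θ i / ((∑ j ∈ S, θ j) + Λ)))) ≤
        Λ ^ 2 * ((∑ j ∈ S, θ j) - θ a) / ((∑ j ∈ S, θ j) ^ 2 * (θ a + Λ)) ∧
      Λ ^ 2 * ((∑ j ∈ S, θ j) - θ a) / ((∑ j ∈ S, θ j) ^ 2 * (θ a + Λ)) ≤
        Λ ^ 2 / ((∑ j ∈ S, θ j) * (θ a + Λ)) := by
  have hT : 0 < ∑ j ∈ S, θ j := sum_pos hθ ⟨a, ha⟩
  have hθ' := add_single_pos hθ hΛ
  have hT' : 0 < ∑ j ∈ S, (θ + Pi.single a Λ : ι → ℝ) j := sum_pos hθ' ⟨a, ha⟩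
  constructor
  · have kl_le_chiSq := sum_mul_log_div_le_chiSqDiv
      (fun i hi => (choiceProb_pos hθ hi).le) (fun i hi => choiceProb_pos hθ' hi)
      ((sum_choiceProb hT.ne').trans (sum_choiceProb hT'.ne').symm).le
    rw [sum_add_single ha] at hT'
    rw [chiSqDiv_choiceProb_add_single ha hT.ne' hT'.ne' hΛ.ne'] at kl_le_chiSq
    simp only [choiceProb_add_single ha] at kl_le_chiSq
    exact kl_le_chiSq
  · calc Λ ^ 2 * (∑ j ∈ S, θ j - θ a) / ((∑ j ∈ S, θ j) ^ 2 * (θ a + Λ))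
        ≤ Λ ^ 2 * (∑ j ∈ S, θ j) / ((∑ j ∈ S, θ j) ^ 2 * (θ a + Λ)) := by
          gcongr
          exact sub_le_self _ (hθ a ha).le
      _ = Λ ^ 2 / ((∑ j ∈ S, θ j) * (θ a + Λ)) := by
          field_simp

theorem stmt_3 {ι : Type*} [DecidableEq ι] (S : Finset ι) (hS : S.Nonempty)
    (θ : ι → ℝ) (hθ : ∀ i ∈ S, 0 < θ i) (a : ι) (ha : a ∈ S) (Λ : ℝ) (hΛ : 0 < Λ) :
    (∑ i ∈ S, (θ i / ∑ j ∈ S, θ j) *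
        Real.log ((θ i / ∑ j ∈ S, θ j) /
          (if i = a then (θ a + Λ) / ((∑ j ∈ S, θ j) + Λ)
            else θ i / ((∑ j ∈ S, θ j) + Λ)))) ≤
        Λ ^ 2 * ((∑ j ∈ S, θ j) - θ a) / ((∑ j ∈ S, θ j) ^ 2 * (θ a + Λ)) ∧
      Λ ^ 2 * ((∑ j ∈ S, θ j) - θ a) / ((∑ j ∈ S, θ j) ^ 2 * (θ a + Λ)) ≤
        Λ ^ 2 / ((∑ j ∈ S, θ j) * (θ a + Λ)) := by
  exact stmt_3_general S θ hθ a ha Λ (add_pos (hθ a ha) hΛ)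
end

section
/- Let S be a finite set of size k ≥ 2, let a ∈ S, let θ > 0, Λ > 0, and let 1 ≤ m ≤ k − 1. Let p be the top-m ranking distribution on S when every item of S has weight θ (so p(σ) = Π_{i=1}^m 1/(k − i + 1) for every ranking σ of m distinct items of S), and let q be the top-m ranking distribution on S with weights w_i = θ for i ≠ a and w_a = θ + Λ. Then the Kullback–Leibler divergence satisfies Σ_σ p(σ) · ln(p(σ)/q(σ)) ≤ m·Λ²/(k·θ·(θ + Λ)), where the sum ranges over all rankings σ of m distinct items of S. -/
open Finset

/-- The probability of observing the ordered list `σ = (σ 0, …, σ (m-1))` of `m` distinct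
items of `S` under top-`m` ranking feedback from `S` with weights `w`:
`∏_{i=1}^m w_{σ(i)} / Σ_{j ∈ S ∖ {σ(1),…,σ(i−1)}} w_j`. -/
noncomputable def topMProb {ι : Type*} [DecidableEq ι] (S : Finset ι) (w : ι → ℝ) {m : ℕ}
    (σ : Fin m ↪ {x // x ∈ S}) : ℝ :=
  ∏ i : Fin m,
    w (σ i : ι) /
      ∑ j ∈ S \ (Finset.univ.filter fun i' : Fin m => i' < i).image fun i' => ((σ i' : {x // x ∈ S}) : ι),
        w j

/-!
Each of the `m` stages contributes two logarithms to `log (p σ / q σ)`, one for the weight of the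
chosen item and one for the total weight of the items still on offer; bound both by `log x ≤ x - 1`.
Under the uniform ranking distribution the item chosen at any stage is uniform on `S`, and the items
still on offer have the same expected average weight as `S`. Hence every stage contributes the same
amount, the average over `S` of `w / θ + θ / w - 2 = (w - θ) ^ 2 / (θ * w)`.
-/

open scoped BigOperators

section UniformAverage

variable {M : Type*} [AddCommMonoid M] [Module ℚ≥0 M]

lemma expect_comp_mulActionHom {G X Y : Type*} [Group G] [Finite G] [MulAction G X]
    [MulAction.IsPretransitive G X] [Fintype X] [MulAction G Y] [Fintype Y] [Nonempty Y]
    (φ : Y →[G] X) (f : X → M) :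
    𝔼 y, f (φ y) = 𝔼 x, f x := by
  cases nonempty_fintype G
  have orbit_average (x x' : X) : 𝔼 g : G, f (g • x) = 𝔼 g : G, f (g • x') := by
    obtain ⟨h, rfl⟩ := MulAction.exists_smul_eq G x' x
    exact Fintype.expect_equiv (Equiv.mulRight h) _ _ fun g ↦ by
      rw [Equiv.coe_mulRight, mul_smul]
  have translate (g : G) : 𝔼 y, f (g • φ y) = 𝔼 y, f (φ y) :=
    Fintype.expect_equiv (MulAction.toPerm g) _ _ fun y ↦ by
      rw [MulAction.toPerm_apply, map_smul]
  let x₀ : X := φ (Classical.arbitrary Y)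
  have : Nonempty X := ⟨x₀⟩
  calc 𝔼 y, f (φ y)
      = 𝔼 g : G, 𝔼 y, f (g • φ y) := by simp only [translate, Fintype.expect_const]
    _ = 𝔼 y, 𝔼 g : G, f (g • φ y) := expect_comm _ _ _
    _ = 𝔼 g : G, f (g • x₀) := by simp only [orbit_average _ x₀, Fintype.expect_const]
    _ = 𝔼 x, 𝔼 g : G, f (g • x) := by simp only [orbit_average _ x₀, Fintype.expect_const]
    _ = 𝔼 g : G, 𝔼 x, f (g • x) := expect_comm _ _ _
    _ = 𝔼 x, f x := by
      have (g : G) : 𝔼 x, f (g • x) = 𝔼 x, f x :=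
        Fintype.expect_equiv (MulAction.toPerm g) _ _ fun _ ↦ rfl
      simp only [this, Fintype.expect_const]

lemma expect_embedding_apply {κ α : Type*} [Fintype κ] [Fintype α] [Nonempty (κ ↪ α)]
    (f : α → M) (i : κ) :
    𝔼 σ : κ ↪ α, f (σ i) = 𝔼 x, f x :=
  expect_comp_mulActionHom (G := Equiv.Perm α)
    { toFun := fun σ : κ ↪ α ↦ σ i, map_smul' := fun _ _ ↦ rfl } f

lemma expect_coe_sort {ι : Type*} (S : Finset ι) (f : ι → M) :
    𝔼 x : S, f x = 𝔼 j ∈ S, f j := by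
  rw [expect, expect, card_univ, Fintype.card_coe, sum_coe_sort]

lemma expect_embedding_coe_apply {ι κ : Type*} [Fintype κ] {S : Finset ι} [Nonempty (κ ↪ S)]
    (f : ι → M) (i : κ) :
    𝔼 σ : κ ↪ S, f (σ i) = 𝔼 j ∈ S, f j := by
  rw [expect_embedding_apply (fun x : S ↦ f x), expect_coe_sort]

end UniformAverage

lemma expect_div_add_expect_div_sub_two {ι K : Type*} [Field K] [CharZero K] {S : Finset ι}
    {w : ι → K} {θ : K} (hS : S.Nonempty) (hθ : θ ≠ 0) (hw : ∀ j ∈ S, w j ≠ 0) :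
    𝔼 j ∈ S, θ / w j + (𝔼 j ∈ S, w j) / θ - 2 = 𝔼 j ∈ S, (w j - θ) ^ 2 / (θ * w j) := by
  have pointwise (j : ι) (hj : j ∈ S) :
      (w j - θ) ^ 2 / (θ * w j) = θ / w j + w j / θ - 2 := by
    have := hw j hj
    field_simp
    ring
  rw [expect_congr rfl pointwise, expect_sub_distrib, expect_add_distrib, expect_const hS,
    expect_div]

lemma expect_sq_sub_div_perturb_single {ι K : Type*} [DecidableEq ι] [Field K] [CharZero K]
    {S : Finset ι} {a : ι} (ha : a ∈ S) (θ Λ : K) :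
    𝔼 j ∈ S, ((if j = a then θ + Λ else θ) - θ) ^ 2 / (θ * if j = a then θ + Λ else θ) =
      Λ ^ 2 / (#S * θ * (θ + Λ)) := by
  rw [expect_eq_sum_div_card, sum_eq_single_of_mem a ha fun j _ hj ↦ by simp [hj], if_pos rfl,
    add_sub_cancel_left, div_div, mul_comm _ (#S : K), mul_assoc]

section Ranking

variable {ι : Type*} [DecidableEq ι] {S : Finset ι} {m : ℕ}

/-- The items of `S` still on offer at stage `i` of the ranking `σ`. This is the index set of the
denominators in `topMProb`, spelled in the same way so that the two agree definitionally. -/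
def remainingItems (σ : Fin m ↪ S) (i : Fin m) : Finset ι :=
  S \ ({i' | i' < i} : Finset (Fin m)).image fun i' ↦ (σ i' : ι)

lemma topMProb_eq_prod_remainingItems (w : ι → ℝ) (σ : Fin m ↪ S) :
    topMProb S w σ = ∏ i, w (σ i) / ∑ j ∈ remainingItems σ i, w j :=
  rfl

lemma remainingItems_subset (σ : Fin m ↪ S) (i : Fin m) : remainingItems σ i ⊆ S :=
  sdiff_subset

lemma apply_mem_remainingItems (σ : Fin m ↪ S) (i : Fin m) : (σ i : ι) ∈ remainingItems σ i := by
  simp [remainingItems]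

lemma sum_remainingItems_add_sum_Iio {M : Type*} [AddCommMonoid M] (f : ι → M) (σ : Fin m ↪ S)
    (i : Fin m) :
    ∑ j ∈ remainingItems σ i, f j + ∑ i' ∈ Iio i, f (σ i') = ∑ j ∈ S, f j := by
  have chosen_subset : ({i' | i' < i} : Finset (Fin m)).image (fun i' ↦ (σ i' : ι)) ⊆ S :=
    image_subset_iff.2 fun i' _ ↦ (σ i').2
  rw [← sum_sdiff chosen_subset,
    sum_image fun _ _ _ _ h ↦ σ.injective (Subtype.ext h), remainingItems, filter_gt_eq_Iio]

lemma card_remainingItems_add (σ : Fin m ↪ S) (i : Fin m) : #(remainingItems σ i) + i = #S := by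
  simpa only [sum_const, smul_eq_mul, mul_one, Fin.card_Iio] using
    sum_remainingItems_add_sum_Iio (fun _ ↦ (1 : ℕ)) σ i

lemma sum_remainingItems_pos {M : Type*} [AddCommMonoid M] [PartialOrder M]
    [IsOrderedCancelAddMonoid M] {w : ι → M} (hw : ∀ j ∈ S, 0 < w j) (σ : Fin m ↪ S) (i : Fin m) :
    0 < ∑ j ∈ remainingItems σ i, w j :=
  sum_pos (fun j hj ↦ hw j (remainingItems_subset σ i hj)) ⟨_, apply_mem_remainingItems σ i⟩

lemma topMProb_const {θ : ℝ} (hθ : θ ≠ 0) (σ : Fin m ↪ S) :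
    topMProb S (fun _ ↦ θ) σ = (Fintype.card (Fin m ↪ S) : ℝ)⁻¹ := by
  have stage (i : Fin m) :
      θ / ∑ _j ∈ remainingItems σ i, θ = ((#S - i : ℕ) : ℝ)⁻¹ := by
    rw [sum_const, nsmul_eq_mul, div_mul_cancel_right₀ hθ,
      Nat.eq_sub_of_add_eq (card_remainingItems_add σ i)]
  rw [topMProb_eq_prod_remainingItems, Fintype.card_embedding_eq, Fintype.card_coe,
    Fintype.card_fin, Nat.descFactorial_eq_prod_range, ← Fin.prod_univ_eq_prod_range (#S - ·),
    Nat.cast_prod, ← prod_inv_distrib]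
  exact prod_congr rfl fun i _ ↦ stage i

lemma sum_topMProb_const_mul {θ : ℝ} (hθ : θ ≠ 0) (F : (Fin m ↪ S) → ℝ) :
    ∑ σ, topMProb S (fun _ ↦ θ) σ * F σ = 𝔼 σ, F σ := by
  simp only [topMProb_const hθ, ← mul_sum, Fintype.expect_eq_sum_div_card, div_eq_inv_mul]

lemma log_topMProb_div_le {v w : ι → ℝ} (hv : ∀ j ∈ S, 0 < v j) (hw : ∀ j ∈ S, 0 < w j)
    (σ : Fin m ↪ S) :
    Real.log (topMProb S v σ / topMProb S w σ) ≤
      ∑ i, (v (σ i) / w (σ i) +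
        (∑ j ∈ remainingItems σ i, w j) / (∑ j ∈ remainingItems σ i, v j) - 2) := by
  have choice_ratio_pos (i : Fin m) : 0 < v (σ i) / w (σ i) :=
    div_pos (hv _ (σ i).2) (hw _ (σ i).2)
  have total_ratio_pos (i : Fin m) :
      0 < (∑ j ∈ remainingItems σ i, w j) / ∑ j ∈ remainingItems σ i, v j :=
    div_pos (sum_remainingItems_pos hw σ i) (sum_remainingItems_pos hv σ i)
  simp only [topMProb_eq_prod_remainingItems, ← prod_div_distrib, div_div_div_eq]
  simp only [mul_comm (∑ j ∈ remainingItems σ _, v j), mul_div_mul_comm]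
  rw [Real.log_prod fun i _ ↦ (mul_pos (choice_ratio_pos i) (total_ratio_pos i)).ne']
  refine sum_le_sum fun i _ ↦ ?_
  rw [Real.log_mul (choice_ratio_pos i).ne' (total_ratio_pos i).ne']
  linarith [Real.log_le_sub_one_of_pos (choice_ratio_pos i),
    Real.log_le_sub_one_of_pos (total_ratio_pos i)]

lemma expect_expect_remainingItems {K : Type*} [Field K] [CharZero K] [Nonempty (Fin m ↪ S)]
    (f : ι → K) (i : Fin m) :
    𝔼 σ : Fin m ↪ S, 𝔼 j ∈ remainingItems σ i, f j = 𝔼 j ∈ S, f j := by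
  let σ₀ := Classical.arbitrary (Fin m ↪ S)
  have card_eq (σ : Fin m ↪ S) : (#(remainingItems σ i) : K) = #S - i := by
    rw [← card_remainingItems_add σ i, Nat.cast_add, add_sub_cancel_right]
  have card_sub_ne_zero : (#S - i : K) ≠ 0 := by
    rw [← card_eq σ₀, Nat.cast_ne_zero, card_ne_zero]
    exact ⟨_, apply_mem_remainingItems σ₀ i⟩
  have sum_eq (σ : Fin m ↪ S) :
      ∑ j ∈ remainingItems σ i, f j = #S * 𝔼 j ∈ S, f j - ∑ i' ∈ Iio i, f (σ i') := by
    rw [card_mul_expect, ← sum_remainingItems_add_sum_Iio f σ i, add_sub_cancel_right]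
  simp only [expect_eq_sum_div_card (remainingItems _ i), card_eq, ← expect_div, sum_eq]
  rw [div_eq_iff card_sub_ne_zero, expect_sub_distrib, Fintype.expect_const, expect_sum_comm]
  simp only [expect_embedding_coe_apply, sum_const, Fin.card_Iio, nsmul_eq_mul]
  ring

theorem stmt_4_general {w : ι → ℝ} {θ : ℝ} (hm : m ≤ #S) (hθ : 0 < θ) (hw : ∀ j ∈ S, 0 < w j) :
    ∑ σ : Fin m ↪ S,
        topMProb S (fun _ ↦ θ) σ * Real.log (topMProb S (fun _ ↦ θ) σ / topMProb S w σ) ≤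
      m * 𝔼 j ∈ S, (w j - θ) ^ 2 / (θ * w j) := by
  have : Nonempty (Fin m ↪ S) := Function.Embedding.nonempty_of_card_le (by simpa using hm)
  have total_ratio (σ : Fin m ↪ S) (i : Fin m) :
      (∑ j ∈ remainingItems σ i, w j) / ∑ _j ∈ remainingItems σ i, θ =
        (𝔼 j ∈ remainingItems σ i, w j) / θ := by
    rw [expect_eq_sum_div_card, sum_const, nsmul_eq_mul, div_div]
  calc ∑ σ : Fin m ↪ S,
        topMProb S (fun _ ↦ θ) σ * Real.log (topMProb S (fun _ ↦ θ) σ / topMProb S w σ)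
      = 𝔼 σ : Fin m ↪ S, Real.log (topMProb S (fun _ ↦ θ) σ / topMProb S w σ) :=
        sum_topMProb_const_mul hθ.ne' _
    _ ≤ 𝔼 σ : Fin m ↪ S, ∑ i, (θ / w (σ i) + (𝔼 j ∈ remainingItems σ i, w j) / θ - 2) := by
        refine expect_le_expect fun σ _ ↦ ?_
        simpa only [total_ratio] using log_topMProb_div_le (fun _ _ ↦ hθ) hw σ
    _ = ∑ i : Fin m, (𝔼 j ∈ S, θ / w j + (𝔼 j ∈ S, w j) / θ - 2) := by
        rw [expect_sum_comm]
        refine sum_congr rfl fun i _ ↦ ?_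
        rw [expect_sub_distrib, expect_add_distrib, Fintype.expect_const, ← expect_div,
          expect_expect_remainingItems, expect_embedding_coe_apply (fun j ↦ θ / w j)]
    _ = m * 𝔼 j ∈ S, (w j - θ) ^ 2 / (θ * w j) := by
        have nonempty_of_stage (i : Fin m) : S.Nonempty :=
          card_pos.1 (i.pos.trans_le hm)
        rw [sum_congr rfl fun i _ ↦ expect_div_add_expect_div_sub_two (nonempty_of_stage i) hθ.ne'
          fun j hj ↦ (hw j hj).ne', sum_const, card_univ, Fintype.card_fin, nsmul_eq_mul]

end Ranking

theorem stmt_4 {ι : Type*} [DecidableEq ι] (S : Finset ι) (k : ℕ) (hk : S.card = k)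
    (hk2 : 2 ≤ k) (a : ι) (ha : a ∈ S) (θ Λ : ℝ) (hθ : 0 < θ) (hΛ : 0 < Λ)
    (m : ℕ) (hm1 : 1 ≤ m) (hm : m ≤ k - 1) :
    ∑ σ : Fin m ↪ {x // x ∈ S},
        topMProb S (fun _ => θ) σ *
          Real.log (topMProb S (fun _ => θ) σ /
            topMProb S (fun i => if i = a then θ + Λ else θ) σ) ≤
      m * Λ ^ 2 / (k * θ * (θ + Λ)) := by
  rw [← hk, mul_div_assoc, ← expect_sq_sub_div_perturb_single ha]
  exact stmt_4_general (by omega) hθ fun j _ ↦ by split_ifs <;> positivity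
end
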